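/- Let V be a 6-dimensional complex vector space, A ⊆ ⋀³V a Lagrangian subspace, 0 ≠ v₀ ∈ V, and V₀ a 5-dimensional subspace with V = ℂv₀ ⊕ V₀ and A ∩ ⋀³V₀ = 0. Then the bilinear form q_A on ⋀²V₀ defined by q_A(α,β) = vol₀(α ∧ q̃_A(β)) is symmetric: vol₀(α ∧ q̃_A(β)) = vol₀(β ∧ q̃_A(α)) for all α, β ∈ ⋀²V₀. -/

import Mathlib

/-!
Expand `0 = vol ((v₀∧α + s) ∧ (v₀∧β + t))`, which holds because `A` is Lagrangian. Elements of
degree two commute with vectors (`wedge2_mul_ι`), so `v₀∧α∧v₀∧β = 0`; the product `s ∧ t` lies in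
`⋀⁶V₀ = 0` because `dim V₀ = 5` (`wedge3_mul_wedge3`). In the remaining two terms, `v₀∧α∧t` and
`s∧v₀∧β`, the latter equals `-v₀∧β∧s`, since `s` has odd degree and `β` even degree
(`wedge3_mul_ι`, `wedge2_mul_wedge3`). Applying `vol` gives the symmetry.
-/

open Module ExteriorAlgebra

noncomputable section

variable {V : Type*} [AddCommGroup V] [Module ℂ V]

/-- The image of `⋀²W` in the exterior algebra, for a subspace `W ⊆ V`. -/
def wedge2 (W : Submodule ℂ V) : Submodule ℂ (ExteriorAlgebra ℂ V) :=
  Submodule.span ℂ {z | ∃ w₁ ∈ W, ∃ w₂ ∈ W, z = ι ℂ w₁ * ι ℂ w₂}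

/-- The image of `⋀³W` in the exterior algebra, for a subspace `W ⊆ V`. -/
def wedge3 (W : Submodule ℂ V) : Submodule ℂ (ExteriorAlgebra ℂ V) :=
  Submodule.span ℂ
    {z | ∃ w₁ ∈ W, ∃ w₂ ∈ W, ∃ w₃ ∈ W, z = ι ℂ w₁ * ι ℂ w₂ * ι ℂ w₃}

end

section Helpers

variable {V : Type*} [AddCommGroup V] [Module ℂ V]

lemma ι_anticomm (a b : V) : ι ℂ a * ι ℂ b = -(ι ℂ b * ι ℂ a) :=
  eq_neg_of_add_eq_zero_left (ι_add_mul_swap a b)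

lemma wedge2_mul_ι {W : Submodule ℂ V} {α : ExteriorAlgebra ℂ V} (hα : α ∈ wedge2 W) (v : V) :
    α * ι ℂ v = ι ℂ v * α := by
  induction hα using Submodule.span_induction with
  | mem x hx =>
    obtain ⟨a, -, b, -, rfl⟩ := hx
    rw [mul_assoc, ι_anticomm b v, mul_neg, ← mul_assoc, ι_anticomm a v, neg_mul, neg_neg,
      mul_assoc]
  | zero => simp
  | add x y _ _ hx hy => rw [add_mul, mul_add, hx, hy]
  | smul c x _ hx => rw [smul_mul_assoc, mul_smul_comm, hx]

lemma wedge3_mul_ι {W : Submodule ℂ V} {s : ExteriorAlgebra ℂ V} (hs : s ∈ wedge3 W) (v : V) :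
    s * ι ℂ v = -(ι ℂ v * s) := by
  induction hs using Submodule.span_induction with
  | mem x hx =>
    obtain ⟨a, ha, b, hb, c, -, rfl⟩ := hx
    have hab : ι ℂ a * ι ℂ b ∈ wedge2 W := Submodule.subset_span ⟨a, ha, b, hb, rfl⟩
    rw [mul_assoc, ι_anticomm c v, mul_neg, ← mul_assoc, wedge2_mul_ι hab v, mul_assoc]
  | zero => simp
  | add x y _ _ hx hy => rw [add_mul, mul_add, hx, hy, neg_add]
  | smul c x _ hx => rw [smul_mul_assoc, mul_smul_comm, hx, smul_neg]

lemma wedge2_mul_wedge3 {W W' : Submodule ℂ V} {β s : ExteriorAlgebra ℂ V}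
    (hβ : β ∈ wedge2 W) (hs : s ∈ wedge3 W') : β * s = s * β := by
  induction hs using Submodule.span_induction with
  | mem x hx =>
    obtain ⟨a, -, b, -, c, -, rfl⟩ := hx
    have h := fun v => (show Commute β (ι ℂ v) from wedge2_mul_ι hβ v)
    exact ((h a).mul_right (h b)).mul_right (h c)
  | zero => simp
  | add x y _ _ hx hy => rw [add_mul, mul_add, hx, hy]
  | smul c x _ hx => rw [smul_mul_assoc, mul_smul_comm, hx]

/-- Six vectors of a subspace of dimension five are linearly dependent, so their wedge product
vanishes. -/
lemma ιMulti_six_eq_zero [FiniteDimensional ℂ V] {W : Submodule ℂ V} (hW : finrank ℂ W = 5)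
    (w : Fin 6 → V) (hw : ∀ i, w i ∈ W) : ιMulti ℂ 6 w = 0 := by
  apply AlternatingMap.map_linearDependent
  intro h
  have h' : LinearIndependent ℂ (fun i => (⟨w i, hw i⟩ : W)) :=
    LinearIndependent.of_comp W.subtype h
  have := h'.fintype_card_le_finrank
  simp [hW] at this

/-- The product of two elements of `⋀³W` lies in `⋀⁶W`, which is zero when `dim W = 5`. -/
lemma wedge3_mul_wedge3 [FiniteDimensional ℂ V] {W : Submodule ℂ V} (hW : finrank ℂ W = 5)
    {s t : ExteriorAlgebra ℂ V} (hs : s ∈ wedge3 W) (ht : t ∈ wedge3 W) : s * t = 0 := by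
  induction hs, ht using Submodule.span_induction₂ with
  | mem_mem x y hx hy =>
    obtain ⟨a, ha, b, hb, c, hc, rfl⟩ := hx
    obtain ⟨d, hd, e, he, f, hf, rfl⟩ := hy
    have h := ιMulti_six_eq_zero hW ![a, b, c, d, e, f] (by
      intro i; fin_cases i <;> assumption)
    simpa [ιMulti_apply, List.ofFn_succ, mul_assoc] using h
  | zero_left y _ => simp
  | zero_right x _ => simp
  | add_left x y z _ _ _ h₁ h₂ => rw [add_mul, h₁, h₂, add_zero]
  | add_right x y z _ _ _ h₁ h₂ => rw [mul_add, h₁, h₂, add_zero]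
  | smul_left r x y _ _ h => rw [smul_mul_assoc, h, smul_zero]
  | smul_right r x y _ _ h => rw [mul_smul_comm, h, smul_zero]

end Helpers

/-- With `V` six-dimensional, `A ⊆ ⋀³V` Lagrangian, `0 ≠ v₀ ∈ V` and `V₀`
a 5-dimensional complement of `ℂv₀` with `A ∩ ⋀³V₀ = 0`, the form
`q_A(α,β) = vol₀(α ∧ q̃_A(β))` on `⋀²V₀` is symmetric: whenever `s, t ∈ ⋀³V₀` satisfy
`v₀∧α + s ∈ A` and `v₀∧β + t ∈ A` (so `s = q̃_A(α)`, `t = q̃_A(β)`), one has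
`vol₀(α ∧ q̃_A(β)) = vol₀(β ∧ q̃_A(α))`, where `vol₀(η) = vol(v₀ ∧ η)`. -/
theorem stmt_10 {V : Type*} [AddCommGroup V] [Module ℂ V] [FiniteDimensional ℂ V]
    (hV : finrank ℂ V = 6)
    (vol : ExteriorAlgebra ℂ V →ₗ[ℂ] ℂ)
    (hvol : Function.Bijective fun x : ⋀[ℂ]^6 V => vol x)
    (A : Submodule ℂ (ExteriorAlgebra ℂ V))
    (hA3 : A ≤ ⋀[ℂ]^3 V) (hA10 : finrank ℂ A = 10)
    (hLag : ∀ α ∈ A, ∀ β ∈ A, vol (α * β) = 0)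
    (v₀ : V) (hv₀ : v₀ ≠ 0)
    (V₀ : Submodule ℂ V) (hV₀ : finrank ℂ V₀ = 5)
    (hcompl : IsCompl (Submodule.span ℂ {v₀}) V₀)
    (hAV₀ : A ⊓ wedge3 V₀ = ⊥) :
    ∀ α ∈ wedge2 V₀, ∀ β ∈ wedge2 V₀, ∀ s ∈ wedge3 V₀, ∀ t ∈ wedge3 V₀,
      ι ℂ v₀ * α + s ∈ A → ι ℂ v₀ * β + t ∈ A →
      vol (ι ℂ v₀ * (α * t)) = vol (ι ℂ v₀ * (β * s)) := by
  intro α hα β hβ s hs t ht h₁ h₂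
  have hαβ : ι ℂ v₀ * α * (ι ℂ v₀ * β) = 0 := by
    rw [← wedge2_mul_ι hα, mul_assoc, ← mul_assoc (ι ℂ v₀), ι_sq_zero, zero_mul, mul_zero]
  have hsβ : s * (ι ℂ v₀ * β) = -(ι ℂ v₀ * (β * s)) := by
    rw [← mul_assoc, wedge3_mul_ι hs, neg_mul, mul_assoc, wedge2_mul_wedge3 hβ hs]
  have h := hLag _ h₁ _ h₂
  rw [add_mul, mul_add, mul_add, hαβ, hsβ, wedge3_mul_wedge3 hV₀ hs ht, zero_add, add_zero,
    map_add, map_neg, mul_assoc] at h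
  exact eq_of_sub_eq_zero (by rwa [sub_eq_add_neg])
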